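/- Let p be a prime, let G be a finite group of order divisible by p, and let S be a Sylow p-subgroup of G. Assume that Ω1(S) ≤ Z(S) and that N_G(S) controls p-fusion in G. Let R = ⟨N_G(S) ∩ O^{p'}(N_G(Q)) : 1 < Q ≤ Ω1(S)⟩ and J = ⟨N_G(S) ∩ S·N_G(Q)' : 1 < Q ≤ Ω1(S)⟩, where N_G(Q)' denotes the derived subgroup of N_G(Q). Then N_G(S)'·R = J; in particular, the abelianization of N_G(S)/R is isomorphic to N_G(S)/J. -/

import Mathlib

open Subgroup Pointwise

/-- `Ω₁(S)`: the subgroup generated by the elements of `S` of order dividing `p`. -/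
def omega1 {G : Type*} [Group G] (p : ℕ) (S : Subgroup G) : Subgroup G :=
  Subgroup.closure {g : G | g ∈ S ∧ g ^ p = 1}

/-- `O^{p'}(H)`: the subgroup generated by the elements of `H` of `p`-power order. -/
def pResidual {G : Type*} [Group G] (p : ℕ) (H : Subgroup G) : Subgroup G :=
  Subgroup.closure {g : G | g ∈ H ∧ ∃ n : ℕ, g ^ p ^ n = 1}

/-- `H` controls `p`-fusion in `G` with respect to the Sylow `p`-subgroup `S`. -/
def ControlsPFusion {G : Type*} [Group G] (S H : Subgroup G) : Prop :=
  ∀ Q : Subgroup G, Q ≤ S → ∀ g : G, (∀ q ∈ Q, g * q * g⁻¹ ∈ S) →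
    ∃ h ∈ H, ∃ c ∈ Subgroup.centralizer (Q : Set G), g = h * c

/-- `R = ⟨N_G(S) ∩ O^{p'}(N_G(Q)) : 1 < Q ≤ Ω₁(S)⟩`. -/
def Rsub {G : Type*} [Group G] (p : ℕ) (S : Subgroup G) : Subgroup G :=
  ⨆ Q ∈ {Q : Subgroup G | Q ≠ ⊥ ∧ Q ≤ omega1 p S},
    Subgroup.normalizer (S : Set G) ⊓ pResidual p (Subgroup.normalizer (Q : Set G))

/-- `J = ⟨N_G(S) ∩ S·N_G(Q)' : 1 < Q ≤ Ω₁(S)⟩`, where `S·N_G(Q)'` is the product set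
of `S` and the derived subgroup of `N_G(Q)`. -/
def Jsub {G : Type*} [Group G] (p : ℕ) (S : Subgroup G) : Subgroup G :=
  Subgroup.closure (⋃ Q ∈ {Q : Subgroup G | Q ≠ ⊥ ∧ Q ≤ omega1 p S},
    (Subgroup.normalizer (S : Set G) : Set G) ∩
      ((S : Set G) * ((⁅Subgroup.normalizer (Q : Set G), Subgroup.normalizer (Q : Set G)⁆ : Subgroup G) : Set G)))

/-!
Write `N = N_G(S)`, and for `1 < Q ≤ Ω₁(S)` let `M = N_G(Q)` and `L = O^{p'}(M)`. Since `Ω₁(S)` is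
centralized by `S`, every such `M` contains `S`. Sylow's theorem in `M` gives `L ≤ S·M'`, and
Frattini's argument gives `M = (N ∩ M)·L`, hence `M' ≤ (N ∩ M)'·L`. Therefore `S·M' = (N ∩ M)'·L`,
and Dedekind's law turns this into `N ∩ S·M' = (N ∩ M)'·(N ∩ L)`. Now join over all `Q`: the factors
`N ∩ L` generate `R`, and the factors `(N ∩ M)'` generate `N'`, because `N ≤ M` for `Q = Ω₁(S)`.
-/

open scoped commutatorElement

section

variable {G : Type*} [Group G]

theorem sup_inf_assoc_of_le_normalizer {A B C : Subgroup G} (hAC : A ≤ C)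
    (hAB : A ≤ normalizer B) : (A ⊔ B) ⊓ C = A ⊔ B ⊓ C := by
  have hA : A ≤ normalizer ((B ⊓ C : Subgroup G) : Set G) :=
    (le_inf hAB (hAC.trans le_normalizer)).trans inf_normalizer_le_normalizer_inf
  apply SetLike.coe_injective
  rw [coe_inf, coe_mul_of_left_le_normalizer_right _ _ hAB,
    coe_mul_of_left_le_normalizer_right _ _ hA, mul_inf_assoc A B C hAC]

theorem le_normalizer_of_le_centralizer {H K : Subgroup G} (h : K ≤ centralizer (H : Set G)) :
    H ≤ normalizer (K : Set G) :=
  (le_centralizer_iff.mp h).trans (centralizer_le_normalizer _)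

theorem commutator_sup_left_le {H₁ H₂ K T : Subgroup G} (h₁ : ⁅H₁, K⁆ ≤ T) (h₂ : ⁅H₂, K⁆ ≤ T)
    (hT : H₁ ⊔ H₂ ≤ normalizer T) : ⁅H₁ ⊔ H₂, K⁆ ≤ T := by
  refine commutator_le.mpr fun g hg k hk ↦ ?_
  rw [sup_eq_closure] at hg hT
  induction hg using closure_induction with
  | mem a ha =>
    exact ha.elim (fun ha ↦ h₁ (commutator_mem_commutator ha hk))
      fun ha ↦ h₂ (commutator_mem_commutator ha hk)
  | one =>
    rw [commutatorElement_one_left]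
    exact one_mem T
  | mul a b ha _ iha ihb =>
    rw [commutatorElement_mul_left_eq_conj_mul]
    exact mul_mem ((mem_normalizer_iff.mp (hT ha) _).mp ihb) iha
  | inv a ha iha =>
    rw [commutatorElement_inv_left, ← commutatorElement_inv]
    exact (mem_normalizer_iff''.mp (hT ha) _).mp (inv_mem iha)

theorem commutator_sup_self_le {K L : Subgroup G} (hKL : K ≤ normalizer L) :
    ⁅K ⊔ L, K ⊔ L⁆ ≤ ⁅K, K⁆ ⊔ L := by
  have hL : K ⊔ L ≤ normalizer L := sup_le hKL le_normalizer
  have hT : K ⊔ L ≤ normalizer ((⁅K, K⁆ ⊔ L : Subgroup G) : Set G) :=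
    sup_le ((le_inf (normalizer_commutator_ge_left K K) hKL).trans
      (normalizer_inf_normalizer_le_normalizer_sup _ _)) (le_sup_right.trans le_normalizer)
  have hK : ⁅K ⊔ L, K⁆ ≤ ⁅K, K⁆ ⊔ L :=
    commutator_sup_left_le le_sup_left
      ((le_normalizer_iff_commutator_le_left.mp hKL).trans le_sup_right) hT
  exact commutator_sup_left_le ((commutator_comm _ _).trans_le hK)
    ((le_normalizer_iff_commutator_le_left.mp hL).trans le_sup_right) hT

end

section

variable {G : Type*} [Group G] {p : ℕ} [Fact p.Prime] [Finite (Sylow p G)]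

theorem exists_conj_mem_sylow (S : Sylow p G) {x : G} {n : ℕ} (hx : x ^ p ^ n = 1) :
    ∃ g : G, ∃ s ∈ S, g * s * g⁻¹ = x := by
  have hP : IsPGroup p (zpowers x) :=
    .of_card_dvd_pow (n := n) (Nat.card_zpowers x ▸ orderOf_dvd_of_pow_eq_one hx)
  obtain ⟨T, hT⟩ := hP.exists_le_sylow
  obtain ⟨g, rfl⟩ := MulAction.exists_smul_eq G S T
  obtain ⟨s, hs, hsx⟩ := hT (mem_zpowers x)
  exact ⟨g, s, hs, hsx⟩

theorem normalizer_inf_sup_eq {L M : Subgroup G} (S : Sylow p G) (hSL : S ≤ L) (hLM : L ≤ M)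
    (hML : M ≤ normalizer L) : normalizer (S : Subgroup G) ⊓ M ⊔ L = M := by
  have : (L.subgroupOf M).Normal := normal_subgroupOf_of_le_normalizer hML
  have hfrattini := (S.subtype (hSL.trans hLM)).normalizer_sup_eq_top' (N := L.subgroupOf M)
    fun _ hx ↦ hSL hx
  rw [← Sylow.coe_coe, Sylow.coe_subtype, ← subgroupOf_normalizer_eq (hSL.trans hLM)] at hfrattini
  have hmap := congrArg (map M.subtype) hfrattini
  rwa [Subgroup.map_sup, subgroupOf_map_subtype, map_subgroupOf_eq_of_le hLM,
    ← MonoidHom.range_eq_map, range_subtype] at hmap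

end

section

variable {G : Type*} [Group G] {p : ℕ}

theorem pResidual_le (p : ℕ) (H : Subgroup G) : pResidual p H ≤ H :=
  (closure_le _).mpr fun _ hx ↦ hx.1

theorem le_normalizer_pResidual (p : ℕ) (H : Subgroup G) :
    H ≤ normalizer (pResidual p H : Set G) := by
  refine le_normalizer_closure_iff.mpr fun h hh x ⟨hx, n, hn⟩ ↦ subset_closure ⟨?_, n, ?_⟩
  · exact mul_mem (mul_mem hh hx) (inv_mem hh)
  · rw [conj_pow, hn, mul_one, mul_inv_cancel]

theorem le_pResidual_of_isPGroup {P H : Subgroup G} (hP : IsPGroup p P) (h : P ≤ H) :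
    P ≤ pResidual p H := fun x hx ↦
  have ⟨n, hn⟩ := hP ⟨x, hx⟩
  subset_closure ⟨h hx, n, congrArg Subtype.val hn⟩

variable [Fact p.Prime] [Finite (Sylow p G)]

theorem pResidual_le_sup_commutator (S : Sylow p G) {M : Subgroup G} (hSM : S ≤ M) :
    pResidual p M ≤ (S : Subgroup G) ⊔ ⁅M, M⁆ := by
  refine (closure_le _).mpr fun x ⟨hx, n, hn⟩ ↦ ?_
  obtain ⟨m, s, hs, hmsx⟩ := exists_conj_mem_sylow (S.subtype hSM) (x := ⟨x, hx⟩) (n := n)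
    (Subtype.ext hn)
  have hx_eq : ⁅(m : G), (s : G)⁆ * s = x := by
    simpa [commutatorElement_def] using congrArg Subtype.val hmsx
  rw [SetLike.mem_coe, ← hx_eq]
  exact mul_mem (mem_sup_right (commutator_mem_commutator m.2 s.2)) (mem_sup_left hs)

theorem sup_commutator_eq_commutator_sup_pResidual (S : Sylow p G) {M : Subgroup G} (hSM : S ≤ M) :
    (S : Subgroup G) ⊔ ⁅M, M⁆ =
      ⁅normalizer (S : Subgroup G) ⊓ M, normalizer (S : Subgroup G) ⊓ M⁆ ⊔ pResidual p M := by
  have hSL : (S : Subgroup G) ≤ pResidual p M := le_pResidual_of_isPGroup S.isPGroup' hSM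
  have hML := le_normalizer_pResidual p M
  have hfrattini := normalizer_inf_sup_eq S hSL (pResidual_le p M) hML
  apply le_antisymm
  · refine sup_le (hSL.trans le_sup_right) ?_
    conv_lhs => rw [← hfrattini]
    exact commutator_sup_self_le (inf_le_right.trans hML)
  · exact sup_le ((commutator_mono inf_le_right inf_le_right).trans le_sup_right)
      (pResidual_le_sup_commutator S hSM)

theorem normalizer_inf_sup_commutator_eq (S : Sylow p G) {M : Subgroup G} (hSM : S ≤ M) :
    normalizer (S : Subgroup G) ⊓ ((S : Subgroup G) ⊔ ⁅M, M⁆) =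
      ⁅normalizer (S : Subgroup G) ⊓ M, normalizer (S : Subgroup G) ⊓ M⁆ ⊔
        normalizer (S : Subgroup G) ⊓ pResidual p M := by
  have hD := commutator_le_self (normalizer (S : Subgroup G) ⊓ M)
  rw [sup_commutator_eq_commutator_sup_pResidual S hSM, inf_comm,
    sup_inf_assoc_of_le_normalizer (hD.trans inf_le_left)
      ((hD.trans inf_le_right).trans (le_normalizer_pResidual p M)), inf_comm (pResidual p M)]

end

section

variable {G : Type*} [Group G] {p : ℕ}

theorem normalizer_le_normalizer_omega1 (p : ℕ) (S : Subgroup G) :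
    normalizer (S : Set G) ≤ normalizer (omega1 p S : Set G) := by
  refine le_normalizer_closure_iff.mpr fun g hg x ⟨hx, hxp⟩ ↦ subset_closure ⟨?_, ?_⟩
  · exact (mem_normalizer_iff.mp hg x).mp hx
  · rw [conj_pow, hxp, mul_one, mul_inv_cancel]

theorem omega1_ne_bot [Fact p.Prime] {S : Subgroup G} (hS : IsPGroup p S) (hne : S ≠ ⊥) :
    omega1 p S ≠ ⊥ := by
  have := S.nontrivial_iff_ne_bot.mpr hne
  obtain ⟨x, hx⟩ := exists_ne (1 : S)
  obtain ⟨k, hk⟩ := hS x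
  have hy : orderOf (x ^ (orderOf x / p)) = p :=
    orderOf_pow_orderOf_div (isOfFinOrder_iff_pow_eq_one.mpr
      ⟨p ^ k, pow_pos (Fact.out : p.Prime).pos k, hk⟩).orderOf_pos.ne' (hS.dvd_orderOf hx)
  set y := x ^ (orderOf x / p)
  have hyp : (y : G) ^ p = 1 := by
    rw [← hy, ← Subgroup.orderOf_coe, pow_orderOf_eq_one]
  intro hbot
  have hy1 : (y : G) ∈ omega1 p S := subset_closure ⟨y.2, hyp⟩
  rw [hbot, mem_bot, OneMemClass.coe_eq_one] at hy1
  exact (Fact.out : p.Prime).ne_one (by rw [← hy, hy1, orderOf_one])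

theorem jsub_eq_iSup {S : Subgroup G} (hcen : omega1 p S ≤ centralizer (S : Set G)) :
    Jsub p S = ⨆ Q ∈ {Q : Subgroup G | Q ≠ ⊥ ∧ Q ≤ omega1 p S}, normalizer (S : Set G) ⊓
      (S ⊔ ⁅normalizer (Q : Set G), normalizer (Q : Set G)⁆) := by
  simp only [Jsub, Subgroup.closure_iUnion]
  refine biSup_congr fun Q hQ ↦ ?_
  have hSM := le_normalizer_of_le_centralizer (hQ.2.trans hcen)
  rw [← coe_mul_of_left_le_normalizer_right _ _ (hSM.trans (normalizer_commutator_ge_left _ _)),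
    ← coe_inf, closure_eq]

theorem rsub_le_normalizer (p : ℕ) (S : Subgroup G) : Rsub p S ≤ normalizer (S : Set G) :=
  iSup₂_le fun _ _ ↦ inf_le_left

theorem iSup_commutator_normalizer_inf {S : Subgroup G} (hne : omega1 p S ≠ ⊥) :
    ⨆ Q ∈ {Q : Subgroup G | Q ≠ ⊥ ∧ Q ≤ omega1 p S},
      ⁅normalizer (S : Set G) ⊓ normalizer (Q : Set G),
        normalizer (S : Set G) ⊓ normalizer (Q : Set G)⁆ =
      ⁅normalizer (S : Set G), normalizer (S : Set G)⁆ := by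
  refine le_antisymm (iSup₂_le fun Q _ ↦ commutator_mono inf_le_left inf_le_left) ?_
  refine le_iSup₂_of_le (omega1 p S) ⟨hne, le_rfl⟩ ?_
  rw [inf_of_le_left (normalizer_le_normalizer_omega1 p S)]

end

theorem stmt1_general {G : Type*} [Group G] (p : ℕ) [Fact p.Prime] [Finite (Sylow p G)]
    (S : Sylow p G) (hS : (S : Subgroup G) ≠ ⊥)
    (hcen : omega1 p (S : Subgroup G) ≤ centralizer ((S : Subgroup G) : Set G)) :
    ((⁅normalizer ((S : Subgroup G) : Set G), normalizer ((S : Subgroup G) : Set G)⁆ :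
        Subgroup G) : Set G) * (Rsub p (S : Subgroup G) : Set G) =
      (Jsub p (S : Subgroup G) : Set G) := by
  rw [← coe_mul_of_right_le_normalizer_left _ _
    ((rsub_le_normalizer p _).trans (normalizer_commutator_ge_left _ _)), SetLike.coe_set_eq,
    ← iSup_commutator_normalizer_inf (omega1_ne_bot S.isPGroup' hS), Rsub, jsub_eq_iSup hcen]
  simp only [← iSup_sup_eq]
  exact biSup_congr fun Q hQ ↦
    (normalizer_inf_sup_commutator_eq S (le_normalizer_of_le_centralizer (hQ.2.trans hcen))).symm

theorem stmt1 {G : Type*} [Group G] [Fintype G] (p : ℕ) [Fact p.Prime]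
    (hdvd : p ∣ Fintype.card G) (S : Sylow p G)
    (hcen : omega1 p (S : Subgroup G) ≤
      (S : Subgroup G) ⊓ Subgroup.centralizer ((S : Subgroup G) : Set G))
    (hfus : ControlsPFusion (S : Subgroup G) (Subgroup.normalizer ((S : Subgroup G) : Set G))) :
    ((⁅Subgroup.normalizer ((S : Subgroup G) : Set G),
        Subgroup.normalizer ((S : Subgroup G) : Set G)⁆ : Subgroup G) : Set G) *
        (Rsub p (S : Subgroup G) : Set G) = (Jsub p (S : Subgroup G) : Set G) :=
  stmt1_general p S (S.ne_bot_of_dvd_card (Nat.card_eq_fintype_card (α := G) ▸ hdvd))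
    (hcen.trans inf_le_right)
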